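/- arXiv:1803.11038 — 2 statements merged into one kernel-verified Lean document; each statement's English description precedes it below -/
import Mathlib

section
/- Let k ≥ 1. For all distinct u, v ∈ ℕ and for every choice of X ∈ {R_k, T_k} and Y ∈ {R_k, T_k}, there exists w ∈ ℕ with (w,u) ∈ X and (w,v) ∈ Y. -/
/-- For `k ≥ 1`, the relation `R_k ⊆ ℕ × ℕ`: `(u,v) ∈ R_k` iff
`v = 2^u·3^j` or `v = 2^j·3^u` for some `j`, or `u = 2^v·3^j` or `u = 2^j·3^v`
for some `j`, or `u = 2^v·5^k`. -/
def Rk (k : ℕ) : Set (ℕ × ℕ) :=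
  {p | (∃ j : ℕ, p.2 = 2 ^ p.1 * 3 ^ j ∨ p.2 = 2 ^ j * 3 ^ p.1) ∨
       (∃ j : ℕ, p.1 = 2 ^ p.2 * 3 ^ j ∨ p.1 = 2 ^ j * 3 ^ p.2) ∨
       p.1 = 2 ^ p.2 * 5 ^ k}

/-- `T_k = (ℕ × ℕ) ∖ R_k`. -/
def Tk (k : ℕ) : Set (ℕ × ℕ) := (Rk k)ᶜ

theorem aux23 (a b c d : ℕ) (h : 2 ^ a * 3 ^ b = 2 ^ c * 3 ^ d) : a = c ∧ b = d := by
  have key : ∀ x y : ℕ, (2 ^ x * 3 ^ y).factorization = Finsupp.single 2 x + Finsupp.single 3 y := by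
    intro x y
    rw [Nat.factorization_mul (by positivity) (by positivity),
      Nat.Prime.factorization_pow Nat.prime_two, Nat.Prime.factorization_pow Nat.prime_three]
  have h2 := congrArg Nat.factorization h
  rw [key, key] at h2
  have e2 := DFunLike.congr_fun h2 2
  have e3 := DFunLike.congr_fun h2 3
  simp at e2 e3
  exact ⟨e2, e3⟩

theorem aux_small (w v : ℕ) (h : v < w) (j : ℕ) : v ≠ 2 ^ w * 3 ^ j ∧ v ≠ 2 ^ j * 3 ^ w := by
  have h2 : w < 2 ^ w := Nat.lt_two_pow_self
  have h3 : w < 3 ^ w := Nat.lt_pow_self (by norm_num)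
  have p2 : 0 < 2 ^ j := by positivity
  have p3 : 0 < 3 ^ j := by positivity
  constructor
  · nlinarith
  · nlinarith

theorem aux_RT (k : ℕ) (hk : 1 ≤ k) (u v : ℕ) (huv : u ≠ v) :
    ∃ w : ℕ, (w, u) ∈ Rk k ∧ (w, v) ∉ Rk k := by
  refine ⟨2 ^ u * 3 ^ (u + v + 1), Or.inr (Or.inl ⟨_, Or.inl rfl⟩), ?_⟩
  have hw : v < 2 ^ u * 3 ^ (u + v + 1) := by
    have h3 : u + v + 1 < 3 ^ (u + v + 1) := Nat.lt_pow_self (by norm_num)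
    have p2 : 0 < 2 ^ u := by positivity
    nlinarith
  rintro (⟨j, h⟩ | ⟨j, h | h⟩ | h)
  · have := aux_small _ _ hw j
    exact h.elim this.1 this.2
  · exact huv (aux23 _ _ _ _ h).1
  · have := (aux23 _ _ _ _ h).2
    omega
  · simp only at h
    have h5 : 5 ∣ 2 ^ u * 3 ^ (u + v + 1) := by
      rw [h]
      exact Dvd.dvd.mul_left (dvd_pow_self 5 (by omega)) _
    rcases (Nat.prime_five.dvd_mul).1 h5 with h | h
    · have := Nat.prime_five.dvd_of_dvd_pow h
      omega
    · have := Nat.prime_five.dvd_of_dvd_pow h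
      omega

theorem aux_T (k u m : ℕ) (hm : u < m) : (7 ^ m, u) ∉ Rk k := by
  have p7 : Nat.Prime 7 := by norm_num
  have hw : u < 7 ^ m := hm.trans (Nat.lt_pow_self (by norm_num))
  have d7 : 7 ∣ 7 ^ m := dvd_pow_self 7 (by omega)
  have nd : ∀ p a q b : ℕ, ¬ 7 ∣ p → ¬ 7 ∣ q → 7 ^ m ≠ p ^ a * q ^ b := by
    intro p a q b hp hq h
    rw [h] at d7
    rcases p7.dvd_mul.1 d7 with h | h
    · exact hp (p7.dvd_of_dvd_pow h)
    · exact hq (p7.dvd_of_dvd_pow h)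
  rintro (⟨j, h⟩ | ⟨j, h | h⟩ | h)
  · have := aux_small _ _ hw j
    exact h.elim this.1 this.2
  · exact nd _ _ _ _ (by norm_num) (by norm_num) h
  · exact nd _ _ _ _ (by norm_num) (by norm_num) h
  · exact nd _ _ _ _ (by norm_num) (by norm_num) h

/-- For `k ≥ 1`, all distinct `u, v ∈ ℕ` and every choice of
`X, Y ∈ {R_k, T_k}`, there is `w` with `(w,u) ∈ X` and `(w,v) ∈ Y`. -/
theorem stmt_8 (k : ℕ) (hk : 1 ≤ k) (u v : ℕ) (huv : u ≠ v)
    (X Y : Set (ℕ × ℕ)) (hX : X = Rk k ∨ X = Tk k) (hY : Y = Rk k ∨ Y = Tk k) :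
    ∃ w : ℕ, (w, u) ∈ X ∧ (w, v) ∈ Y := by
  rcases hX with rfl | rfl <;> rcases hY with rfl | rfl
  · exact ⟨2 ^ u * 3 ^ v, Or.inr (Or.inl ⟨_, Or.inl rfl⟩), Or.inr (Or.inl ⟨_, Or.inr rfl⟩)⟩
  · exact aux_RT k hk u v huv
  · obtain ⟨w, h1, h2⟩ := aux_RT k hk v u huv.symm
    exact ⟨w, h2, h1⟩
  · exact ⟨7 ^ (u + v + 1), aux_T k u _ (by omega), aux_T k v _ (by omega)⟩
end

section
/- Let D be an ultrafilter on a set J and let Z' = ⟨S', P', C', I'⟩ be the ultrapower of Z with respect to D. Then every member X of the term algebra of Z' splits only finitely many pairs (x,y) of distinct elements of I'. -/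
open FirstOrder FirstOrder.Language

/-- Relation symbols of the language of atom structures: a unary `I`,
a binary `C` and a ternary `P`. -/
inductive AtomRel : ℕ → Type
  | I : AtomRel 1
  | C : AtomRel 2
  | P : AtomRel 3

/-- The first-order language with one ternary relation symbol `P`, one binary
relation symbol `C` and one unary relation symbol `I`. -/
def atomLang : FirstOrder.Language :=
  ⟨fun _ => Empty, AtomRel⟩

/-- Function symbols of the language of the term algebras: a constant `1'`,
unary symbols `−` (complement) and `⁻` (converse), binary symbols `+` and `;`. -/
inductive AlgFun : ℕ → Type
  | one : AlgFun 0
  | compl : AlgFun 1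
  | conv : AlgFun 1
  | add : AlgFun 2
  | comp : AlgFun 2

/-- The first-order language with binary operations `+` and `;`, unary
operations `−` and `⁻`, and a constant `1'`. -/
def algLang : FirstOrder.Language :=
  ⟨AlgFun, fun _ => Empty⟩

section Generic

variable {M : Type} [atomLang.Structure M]

/-- The interpretation of the unary relation symbol `I`. -/
def mI (a : M) : Prop := Structure.RelMap (L := atomLang) (AtomRel.I : atomLang.Relations 1) ![a]

/-- The interpretation of the binary relation symbol `C`. -/
def mC (a b : M) : Prop := Structure.RelMap (L := atomLang) (AtomRel.C : atomLang.Relations 2) ![a, b]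

/-- The interpretation of the ternary relation symbol `P`. -/
def mP (a b c : M) : Prop := Structure.RelMap (L := atomLang) (AtomRel.P : atomLang.Relations 3) ![a, b, c]

/-- `X ; Y = {u : ∃ x ∈ X, y ∈ Y, P(x,y,u)}`. -/
def sComp (X Y : Set M) : Set M := {u | ∃ x ∈ X, ∃ y ∈ Y, mP x y u}

/-- `X⁻ = {u : ∃ x ∈ X, C(x,u)}`. -/
def sConv (X : Set M) : Set M := {u | ∃ x ∈ X, mC x u}

/-- The set of elements satisfying `I`. -/
def idSet (M : Type) [atomLang.Structure M] : Set M := {a | mI a}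

end Generic

/-- Membership in the term algebra: the smallest collection of subsets of `M`
containing all singletons and the set `I`, closed under binary union,
complementation, `;` and `⁻`. -/
inductive InTA (M : Type) [atomLang.Structure M] : Set M → Prop
  | sing (a : M) : InTA M {a}
  | idset : InTA M (idSet M)
  | union {X Y : Set M} : InTA M X → InTA M Y → InTA M (X ∪ Y)
  | compl {X : Set M} : InTA M X → InTA M Xᶜ
  | comp {X Y : Set M} : InTA M X → InTA M Y → InTA M (sComp X Y)
  | conv {X : Set M} : InTA M X → InTA M (sConv X)

/-- The term algebra of an atom structure, as a type. -/
def TermAlg (M : Type) [atomLang.Structure M] : Type := {X : Set M // InTA M X}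

/-- The term algebra as a structure in the language `algLang`:
`+` is union, `−` is complement, `;` and `⁻` are the operations defined from
`P` and `C`, and `1'` is the set `I`. -/
instance termAlgStructure (M : Type) [atomLang.Structure M] :
    algLang.Structure (TermAlg M) where
  funMap := fun {_} f v =>
    match f with
    | .one => ⟨idSet M, InTA.idset⟩
    | .compl => ⟨(v 0).1ᶜ, InTA.compl (v 0).2⟩
    | .conv => ⟨sConv (v 0).1, InTA.conv (v 0).2⟩
    | .add => ⟨(v 0).1 ∪ (v 1).1, InTA.union (v 0).2 (v 1).2⟩
    | .comp => ⟨sComp (v 0).1 (v 1).1, InTA.comp (v 0).2 (v 1).2⟩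
  RelMap := fun {_} r _ => r.elim

/-- `a` goes from `x` to `y` when `P(x,a,a)` and `P(a,y,a)`. -/
def goes {M : Type} [atomLang.Structure M] (a x y : M) : Prop := mP x a a ∧ mP a y a

/-- `X` splits the pair `(x,y)` when some `a ∈ X` and some `b ∉ X` both go
from `x` to `y`. -/
def SplitsG {M : Type} [atomLang.Structure M] (X : Set M) (x y : M) : Prop :=
  ∃ a ∈ X, ∃ b ∉ X, goes a x y ∧ goes b x y

/-- The pair `(x,y)` is splitable when `x ≠ y` and at least two distinct
elements go from `x` to `y`. -/
def SplitableG {M : Type} [atomLang.Structure M] (x y : M) : Prop :=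
  x ≠ y ∧ ∃ a b : M, a ≠ b ∧ goes a x y ∧ goes b x y

/-- Converse of a binary relation, as a set of pairs. -/
def relConv {U : Type} (R : Set (U × U)) : Set (U × U) := {p | (p.2, p.1) ∈ R}

/-- Composition of binary relations, as sets of pairs. -/
def relComp {U : Type} (R T : Set (U × U)) : Set (U × U) :=
  {p | ∃ w, (p.1, w) ∈ R ∧ (w, p.2) ∈ T}

/-- An atom structure is completely representable. -/
def CompRep (M : Type) [atomLang.Structure M] : Prop :=
  ∃ (U : Type) (rep : M → Set (U × U)),
    (∀ a : M, (rep a).Nonempty) ∧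
    (∀ a b : M, a ≠ b → Disjoint (rep a) (rep b)) ∧
    (⋃ a : M, rep a) = Set.univ ∧
    (∀ a : M, (mI a ↔ rep a ⊆ Set.diagonal U) ∧
      ((rep a ⊆ Set.diagonal U) ↔ (rep a ∩ Set.diagonal U).Nonempty)) ∧
    (∀ a b : M, (mC a b ↔ rep b = relConv (rep a)) ∧
      ((rep b = relConv (rep a)) ↔ (rep b ∩ relConv (rep a)).Nonempty)) ∧
    (∀ a b c : M, (mP a b c ↔ rep c ⊆ relComp (rep a) (rep b)) ∧
      ((rep c ⊆ relComp (rep a) (rep b)) ↔ (rep c ∩ relComp (rep a) (rep b)).Nonempty))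
/-- The atoms of the atom structure `Z`: identity atoms `id n i` (`i ≤ n`),
split atoms `r n k` and their converses `rc n k` (`1 ≤ k ≤ n`), and
atoms `w n i m j` (`i ≤ n`, `j ≤ m`).  Distinct constructor applications give
pairwise distinct elements. -/
inductive Atom : Type
  | id : (n i : ℕ) → i ≤ n → Atom
  | r : (n k : ℕ) → 1 ≤ k → k ≤ n → Atom
  | rc : (n k : ℕ) → 1 ≤ k → k ≤ n → Atom
  | w : (n i m j : ℕ) → i ≤ n → j ≤ m → Atom

/-- The domain function of `Z`. -/
def Atom.dom : Atom → Atom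
  | .id n i h => .id n i h
  | .r n _ _ _ => .id n 0 (Nat.zero_le n)
  | .rc n k _ h2 => .id n k h2
  | .w n i _ _ hi _ => .id n i hi

/-- The range function of `Z`. -/
def Atom.rg : Atom → Atom
  | .id n i h => .id n i h
  | .r n k _ h2 => .id n k h2
  | .rc n _ _ _ => .id n 0 (Nat.zero_le n)
  | .w _ _ m j _ hj => .id m j hj

/-- Membership in the set `I` of identity atoms of `Z`. -/
def Atom.isId : Atom → Prop
  | .id _ _ _ => True
  | _ => False

/-- The converse function on atoms of `Z`. -/
def Atom.cnv : Atom → Atom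
  | .id n i h => .id n i h
  | .r n k h1 h2 => .rc n k h1 h2
  | .rc n k h1 h2 => .r n k h1 h2
  | .w n i m j hi hj => .w m j n i hj hi

/-- The binary relation `C` of `Z`: it consists of the pairs `(x,x)` for
`x ∈ I`, `(r n k, rc n k)`, `(rc n k, r n k)` and `(w n i m j, w m j n i)`,
i.e. exactly the pairs `(a, cnv a)`. -/
def Crel (a b : Atom) : Prop := b = Atom.cnv a

/-- The ternary relation `P` of `Z`: the triples `(dom a, a, a)` and
`(a, rg a, a)` for `a ∈ S`, the triples `(a, b, dom a)` for `(a,b) ∈ C`, and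
the triples `(a,b,c)` of non-identity atoms with `dom a = dom c`,
`rg a = dom b`, `rg b = rg c`. -/
def Prel (a b c : Atom) : Prop :=
  (a = b.dom ∧ c = b) ∨
  (b = a.rg ∧ c = a) ∨
  (Crel a b ∧ c = a.dom) ∨
  (¬ a.isId ∧ ¬ b.isId ∧ ¬ c.isId ∧ a.dom = c.dom ∧ a.rg = b.dom ∧ b.rg = c.rg)

/-- `Z` as a structure for the language `atomLang`. -/
instance atomStructureZ : atomLang.Structure Atom where
  funMap := fun {_} f _ => f.elim
  RelMap := fun {_} r v =>
    match r with
    | AtomRel.I => (v 0).isId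
    | AtomRel.C => Crel (v 0) (v 1)
    | AtomRel.P => Prel (v 0) (v 1) (v 2)

/-- `X ⊆ S` splits the pair `(x,y)` if there are `a ∈ X` and `b ∉ X` with
`dom a = dom b = x` and `rg a = rg b = y`. -/
def Splits (X : Set Atom) (x y : Atom) : Prop :=
  ∃ a ∈ X, ∃ b ∉ X, a.dom = x ∧ a.rg = y ∧ b.dom = x ∧ b.rg = y

/-- The pair `(x,y)` is splitable if `x ≠ y` and there are two distinct
elements `a ≠ b` of `S` with `dom a = dom b = x` and `rg a = rg b = y`. -/
def Splitable (x y : Atom) : Prop :=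
  x ≠ y ∧ ∃ a b : Atom, a ≠ b ∧ a.dom = x ∧ a.rg = y ∧ b.dom = x ∧ b.rg = y

/-- The ultrapower `Z'` of the atom structure `Z` with respect to an
ultrafilter `D` on `J`. -/
def UPow (J : Type) (D : Ultrafilter J) : Type :=
  (D : Filter J).Product (fun _ : J => Atom)

/-- The ultraproduct structure on the ultrapower of `Z`. -/
instance uPowStructure (J : Type) (D : Ultrafilter J) : atomLang.Structure (UPow J D) :=
  inferInstanceAs (atomLang.Structure ((D : Filter J).Product fun _ : J => Atom))

theorem zgo_dom {x a : Atom} (hx : x.isId) (h : Prel x a a) : a.dom = x := by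
  cases x <;> simp only [Atom.isId] at hx
  rcases h with h | h | h | h
  · exact h.1.symm
  · rw [h.2]; rfl
  · rw [h.2]; rfl
  · exact absurd trivial h.1

theorem zgo_rg {y a : Atom} (hy : y.isId) (h : Prel a y a) : a.rg = y := by
  cases y <;> simp only [Atom.isId] at hy
  rcases h with h | h | h | h
  · rw [h.2]; rfl
  · exact h.1.symm
  · have h1 : _ = _ := h.1
    cases a <;> first | exact h1.symm | cases h1
  · exact absurd trivial h.2.1

theorem zdom_P (a : Atom) : Prel a.dom a a := Or.inl ⟨rfl, rfl⟩

theorem zrg_P (a : Atom) : Prel a a.rg a := Or.inr (Or.inl ⟨rfl, rfl⟩)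

theorem zid {a : Atom} (h : a.isId) : a.dom = a ∧ a.rg = a := by
  cases a <;> simp_all [Atom.isId, Atom.dom, Atom.rg]

theorem zcnv (a : Atom) : a.cnv.dom = a.rg ∧ a.cnv.rg = a.dom ∧ a.cnv.cnv = a := by
  cases a <;> simp [Atom.cnv, Atom.dom, Atom.rg]

theorem zdomid (a : Atom) : a.dom.isId := by
  cases a <;> simp [Atom.dom, Atom.isId]

theorem zcomp {a b u v x y : Atom} (hx : x.isId) (hy : y.isId) (hxy : x ≠ y)
    (hP : Prel a b u) (u1 : Prel x u u) (u2 : Prel u y u)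
    (v1 : Prel x v v) (v2 : Prel v y v) :
    (a = x ∧ b = u) ∨ (a = u ∧ b = y) ∨ Prel a b v := by
  have e1 := zgo_dom hx u1
  have e2 := zgo_rg hy u2
  have e3 := zgo_dom hx v1
  have e4 := zgo_rg hy v2
  rcases hP with h | h | h | h
  · exact Or.inl ⟨by rw [h.1, ← h.2, e1], h.2.symm⟩
  · exact Or.inr (Or.inl ⟨h.2.symm, by rw [h.1, ← h.2, e2]⟩)
  · have : u.isId := by rw [h.2]; exact zdomid a
    have := zid this
    exact absurd (by rw [← e1, ← e2, this.1, this.2]) hxy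
  · refine Or.inr (Or.inr (Or.inr (Or.inr (Or.inr ⟨h.1, h.2.1, ?_, ?_, h.2.2.2.2.1, ?_⟩))))
    · intro hv
      have := zid hv
      exact hxy (by rw [← e3, ← e4, this.1, this.2])
    · rw [h.2.2.2.1, e1, e3]
    · rw [h.2.2.2.2.2, e2, e4]

section UP

variable {J : Type} {D : Ultrafilter J}

/-- The class of a function in the ultrapower. -/
def umk (D : Ultrafilter J) (f : J → Atom) : UPow J D :=
  Quotient.mk ((D : Filter J).productSetoid fun _ => Atom) f

theorem umk_surj (x : UPow J D) : ∃ f, umk D f = x := Quotient.exists_rep x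

theorem umk_eq {f g : J → Atom} : umk D f = umk D g ↔ ∀ᶠ j in D, f j = g j :=
  Quotient.eq (r := (D : Filter J).productSetoid fun _ => Atom)

theorem umk_rel {n : ℕ} (R : atomLang.Relations n) (f : Fin n → J → Atom) :
    (Structure.RelMap R (fun i => umk D (f i))) ↔
      ∀ᶠ j in D, Structure.RelMap R (fun i => f i j) :=
  (@relMap_quotient_mk' atomLang (J → Atom) ((D : Filter J).productSetoid fun _ => Atom)
    (Ultraproduct.setoidPrestructure (fun _ : J => Atom) D) n R f)

theorem umk_I {f : J → Atom} : mI (umk D f) ↔ ∀ᶠ j in D, (f j).isId := by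
  refine Iff.trans (iff_of_eq (congrArg (Structure.RelMap _) ?_))
    (umk_rel (D := D) (AtomRel.I : atomLang.Relations 1) ![f])
  funext i; fin_cases i; rfl

theorem umk_C {f g : J → Atom} : mC (umk D f) (umk D g) ↔ ∀ᶠ j in D, Crel (f j) (g j) := by
  refine Iff.trans (iff_of_eq (congrArg (Structure.RelMap _) ?_))
    (umk_rel (D := D) (AtomRel.C : atomLang.Relations 2) ![f, g])
  funext i; fin_cases i <;> rfl

theorem umk_P {f g h : J → Atom} :
    mP (umk D f) (umk D g) (umk D h) ↔ ∀ᶠ j in D, Prel (f j) (g j) (h j) := by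
  refine Iff.trans (iff_of_eq (congrArg (Structure.RelMap _) ?_))
    (umk_rel (D := D) (AtomRel.P : atomLang.Relations 3) ![f, g, h])
  funext i; fin_cases i <;> rfl

theorem up_uniq {a x y x' y' : UPow J D} (hx : mI x) (hy : mI y) (hx' : mI x') (hy' : mI y')
    (h : goes a x y) (h' : goes a x' y') : x = x' ∧ y = y' := by
  obtain ⟨a, rfl⟩ := umk_surj a
  obtain ⟨x, rfl⟩ := umk_surj x
  obtain ⟨y, rfl⟩ := umk_surj y
  obtain ⟨x', rfl⟩ := umk_surj x'
  obtain ⟨y', rfl⟩ := umk_surj y'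
  simp only [goes, umk_I, umk_P, umk_eq] at *
  constructor
  · filter_upwards [hx, hx', h.1, h'.1] with j h1 h2 h3 h4
    rw [← zgo_dom h1 h3, zgo_dom h2 h4]
  · filter_upwards [hy, hy', h.2, h'.2] with j h1 h2 h3 h4
    rw [← zgo_rg h1 h3, zgo_rg h2 h4]

theorem up_id {a x y : UPow J D} (hx : mI x) (hy : mI y) (ha : mI a)
    (h : goes a x y) : x = y := by
  obtain ⟨a, rfl⟩ := umk_surj a
  obtain ⟨x, rfl⟩ := umk_surj x
  obtain ⟨y, rfl⟩ := umk_surj y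
  simp only [goes, umk_I, umk_P, umk_eq] at *
  filter_upwards [hx, hy, ha, h.1, h.2] with j h1 h2 h3 h4 h5
  rw [← zgo_dom h1 h4, ← zgo_rg h2 h5, (zid h3).1, (zid h3).2]

theorem up_conv_ex (v : UPow J D) : ∃ b, mC b v := by
  obtain ⟨v, rfl⟩ := umk_surj v
  refine ⟨umk D fun j => (v j).cnv, umk_C.2 (Filter.Eventually.of_forall fun j => ?_)⟩
  exact (zcnv (v j)).2.2.symm

theorem up_conv {a u x y : UPow J D} (hx : mI x) (hy : mI y) (hC : mC a u)
    (h : goes u x y) : goes a y x := by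
  obtain ⟨a, rfl⟩ := umk_surj a
  obtain ⟨u, rfl⟩ := umk_surj u
  obtain ⟨x, rfl⟩ := umk_surj x
  obtain ⟨y, rfl⟩ := umk_surj y
  simp only [goes, umk_I, umk_P, umk_C, Crel] at *
  constructor
  · filter_upwards [hy, h.2, hC] with j h1 h2 h3
    rw [← zgo_rg h1 h2, h3, (zcnv (a j)).2.1]
    exact zdom_P _
  · filter_upwards [hx, h.1, hC] with j h1 h2 h3
    rw [← zgo_dom h1 h2, h3, (zcnv (a j)).1]
    exact zrg_P _

theorem up_comp {a b u v x y : UPow J D} (hx : mI x) (hy : mI y) (hxy : x ≠ y)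
    (hP : mP a b u) (hu : goes u x y) (hv : goes v x y) :
    (a = x ∧ b = u) ∨ (a = u ∧ b = y) ∨ mP a b v := by
  obtain ⟨a, rfl⟩ := umk_surj a
  obtain ⟨b, rfl⟩ := umk_surj b
  obtain ⟨u, rfl⟩ := umk_surj u
  obtain ⟨v, rfl⟩ := umk_surj v
  obtain ⟨x, rfl⟩ := umk_surj x
  obtain ⟨y, rfl⟩ := umk_surj y
  rw [Ne, umk_eq, ← Ultrafilter.eventually_not] at hxy
  simp only [goes, umk_I, umk_P, umk_eq] at *
  simp only [← Filter.eventually_and, ← Ultrafilter.eventually_or]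
  filter_upwards [hx, hy, hxy, hP, hu.1, hu.2, hv.1, hv.2] with j h1 h2 h3 h4 h5 h6 h7 h8
  exact zcomp h1 h2 h3 h4 h5 h6 h7 h8

end UP

/-- Every member of the term algebra of an ultrapower `Z'` of `Z` splits only
finitely many pairs `(x,y)` of distinct elements of `I'`. -/
theorem stmt_12 (J : Type) (D : Ultrafilter J)
    (X : Set (UPow J D)) (hX : InTA (UPow J D) X) :
    {p : UPow J D × UPow J D |
      mI p.1 ∧ mI p.2 ∧ p.1 ≠ p.2 ∧ SplitsG X p.1 p.2}.Finite := by
  induction hX with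
  | sing a =>
    refine Set.Subsingleton.finite ?_
    rintro ⟨x, y⟩ ⟨hx, hy, -, c, hc, -, -, hg, -⟩ ⟨x', y'⟩ ⟨hx', hy', -, c', hc', -, -, hg', -⟩
    rw [Set.mem_singleton_iff] at hc hc'
    subst hc hc'
    obtain ⟨h1, h2⟩ := up_uniq hx hy hx' hy' hg hg'
    exact Prod.ext h1 h2
  | idset =>
    refine Set.finite_empty.subset ?_
    rintro ⟨x, y⟩ ⟨hx, hy, hxy, c, hc, -, -, hg, -⟩
    exact hxy (up_id hx hy hc hg)
  | union _ _ ihX ihY =>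
    refine (ihX.union ihY).subset ?_
    rintro ⟨x, y⟩ ⟨hx, hy, hxy, c, hc, d, hd, hg⟩
    rw [Set.mem_union, not_or] at hd
    rcases hc with hc | hc
    · exact Or.inl ⟨hx, hy, hxy, c, hc, d, hd.1, hg⟩
    · exact Or.inr ⟨hx, hy, hxy, c, hc, d, hd.2, hg⟩
  | compl _ ih =>
    refine ih.subset ?_
    rintro ⟨x, y⟩ ⟨hx, hy, hxy, c, hc, d, hd, hg⟩
    exact ⟨hx, hy, hxy, d, not_not.1 hd, c, hc, hg.2, hg.1⟩
  | comp _ _ ihX ihY =>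
    refine (ihX.union ihY).subset ?_
    rintro ⟨x, y⟩ ⟨hx, hy, hxy, u, ⟨a, ha, b, hb, hP⟩, v, hv, hg, hg'⟩
    rcases up_comp hx hy hxy hP hg hg' with ⟨h1, h2⟩ | ⟨h1, h2⟩ | h
    · subst h1 h2
      exact Or.inr ⟨hx, hy, hxy, _, hb, v, fun h => hv ⟨_, ha, v, h, hg'.1⟩, hg, hg'⟩
    · subst h1 h2
      exact Or.inl ⟨hx, hy, hxy, _, ha, v, fun h => hv ⟨v, h, _, hb, hg'.2⟩, hg, hg'⟩
    · exact absurd ⟨a, ha, b, hb, h⟩ hv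
  | conv _ ih =>
    refine (ih.image Prod.swap).subset ?_
    rintro ⟨x, y⟩ ⟨hx, hy, hxy, u, ⟨a, ha, hC⟩, v, hv, hg, hg'⟩
    obtain ⟨b, hb⟩ := up_conv_ex v
    exact ⟨(y, x), ⟨hy, hx, hxy.symm, a, ha, b, fun h => hv ⟨b, h, hb⟩,
      up_conv hx hy hC hg, up_conv hx hy hb hg'⟩, rfl⟩
end
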